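/- arXiv:1811.07989 — 3 statements merged into one kernel-verified Lean document; each statement's English description precedes it below -/
import Mathlib

section
/- For every ε > 0 there exists a constant C > 0 such that for every integer k ≥ 3 there is a positive integer t with t ≤ C · k^(5/2+ε) having the following property: for every positive integer n, every equinumerous t-coloring of [t·n] contains a rainbow arithmetic progression of length k. (Equivalently, T_k = O(k^(5/2+ε)) for all ε > 0.) -/
/-- `c` is an equinumerous `t`-coloring of `[t*n] = {1, ..., t*n}`:
each color class `c⁻¹(i)` for `i ∈ {1, ..., t}` has exactly `n` elements. -/
def EquinumerousColoring (t n : ℕ) (c : ℕ → ℕ) : Prop :=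
  ∀ i, 1 ≤ i → i ≤ t → ((Finset.Icc 1 (t * n)).filter (fun x => c x = i)).card = n

/-- The arithmetic progression with first term `a`, common difference `d` and
length `k` is rainbow with respect to the coloring `c`. -/
def RainbowAP (k : ℕ) (c : ℕ → ℕ) (a d : ℕ) : Prop :=
  ∀ i < k, ∀ j < k, c (a + i * d) = c (a + j * d) → i = j

/-!
Take `t = 2 k s`. If no progression is rainbow, each of the `k (s n) ^ 2` progressions with
`a ≤ k s n` and `d ≤ s n` contains two terms `x < y` of the same color. Given `x` and `y`, it is
determined by the index of `x` and the index gap `m < k` between them, which divides `y - x`. So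
`k (s n) ^ 2` is at most `k` times the sum of `τ_k (y - x)` over same-colored pairs, where `τ_k`
counts the divisors up to `k`.

Since `τ_k` is submultiplicative, the mean over `[t n]` of each of its powers is at most a power of
`1 + log k`. By Hölder's inequality the sum of `τ_k` over `n` elements of `[t n]` is therefore
`O(n (t k ^ δ) ^ (1 / q))` for all `q` and `δ > 0`, which contradicts the count for `s` of order
`k ^ (1 + ε)` once `q` is large.
-/

open Finset

lemma harmonic_cast_nonneg (k : ℕ) : (0 : ℝ) ≤ harmonic k := by
  rw [harmonic]
  positivity

section SmallDivisors

/-- The divisors of `D` up to `k`. These contain the possible index gaps between two terms at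
distance `D` of a progression of length `k`. -/
def smallDivisors (k D : ℕ) : Finset ℕ := {m ∈ Icc 1 k | m ∣ D}

variable (k : ℕ)

open scoped Pointwise in
lemma card_smallDivisors_mul_le (a b : ℕ) :
    #(smallDivisors k (a * b)) ≤ #(smallDivisors k a) * #(smallDivisors k b) := by
  have hsub : smallDivisors k (a * b) ⊆ smallDivisors k a * smallDivisors k b := by
    intro m hm
    simp only [smallDivisors, mem_filter, mem_Icc] at hm
    obtain ⟨⟨hm_pos, hmk⟩, hdvd⟩ := hm
    obtain ⟨u, v, hu, hv, rfl⟩ := exists_dvd_and_dvd_of_dvd_mul hdvd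
    have hu_pos : 0 < u := Nat.pos_of_mul_pos_right hm_pos
    have hv_pos : 0 < v := Nat.pos_of_mul_pos_left hm_pos
    refine mul_mem_mul ?_ ?_ <;> simp only [smallDivisors, mem_filter, mem_Icc]
    · exact ⟨⟨hu_pos, (Nat.le_mul_of_pos_right u hv_pos).trans hmk⟩, hu⟩
    · exact ⟨⟨hv_pos, (Nat.le_mul_of_pos_left v hu_pos).trans hmk⟩, hv⟩
  exact (card_le_card hsub).trans card_mul_le

lemma sum_card_smallDivisors_nsmul {R : Type*} [AddCommMonoid R] (X : ℕ) (f : ℕ → R) :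
    ∑ D ∈ Icc 1 X, #(smallDivisors k D) • f D =
      ∑ m ∈ Icc 1 k, ∑ e ∈ Icc 1 (X / m), f (m * e) := by
  have hswap : ∑ D ∈ Icc 1 X, ∑ _m ∈ smallDivisors k D, f D =
      ∑ m ∈ Icc 1 k, ∑ D ∈ Icc 1 X with m ∣ D, f D :=
    sum_comm' fun D m ↦ by simp only [smallDivisors, mem_filter]; tauto
  simp only [sum_const] at hswap
  rw [hswap]
  refine sum_congr rfl fun m hm ↦ ?_
  have hm_pos : 0 < m := (mem_Icc.1 hm).1
  refine sum_nbij' (· / m) (m * ·) ?_ ?_ ?_ ?_ ?_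
  · intro D hD
    obtain ⟨hDX, hdvd⟩ := mem_filter.1 hD
    obtain ⟨hD_pos, hDX⟩ := mem_Icc.1 hDX
    exact mem_Icc.2 ⟨Nat.div_pos (Nat.le_of_dvd hD_pos hdvd) hm_pos, Nat.div_le_div_right hDX⟩
  · intro e he
    obtain ⟨he_pos, heX⟩ := mem_Icc.1 he
    exact mem_filter.2 ⟨mem_Icc.2 ⟨Nat.mul_pos hm_pos he_pos,
      (Nat.mul_le_mul_left m heX).trans (Nat.mul_div_le X m)⟩, dvd_mul_right m e⟩
  · exact fun D hD ↦ Nat.mul_div_cancel' (mem_filter.1 hD).2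
  · exact fun e _ ↦ Nat.mul_div_cancel_left e hm_pos
  · exact fun D hD ↦ by rw [Nat.mul_div_cancel' (mem_filter.1 hD).2]

lemma card_smallDivisors_mul_pow_le (q a b : ℕ) :
    (#(smallDivisors k (a * b)) : ℝ) ^ q ≤
      (#(smallDivisors k a) : ℝ) ^ q * (#(smallDivisors k b) : ℝ) ^ q := by
  rw [← mul_pow]
  gcongr
  exact_mod_cast card_smallDivisors_mul_le k a b

lemma sum_card_smallDivisors_pow_div_le (q : ℕ) :
    ∑ m ∈ Icc 1 k, (#(smallDivisors k m) : ℝ) ^ q / m ≤ (harmonic k : ℝ) ^ 2 ^ q := by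
  induction q with
  | zero => simp [harmonic_eq_sum_Icc]
  | succ q ih =>
    set S : ℝ := ∑ m ∈ Icc 1 k, (#(smallDivisors k m) : ℝ) ^ q / m
    have hS : 0 ≤ S := sum_nonneg fun m _ ↦ by positivity
    calc ∑ m ∈ Icc 1 k, (#(smallDivisors k m) : ℝ) ^ (q + 1) / m
        = ∑ m ∈ Icc 1 k, #(smallDivisors k m) • ((#(smallDivisors k m) : ℝ) ^ q / m) :=
          sum_congr rfl fun m _ ↦ by rw [nsmul_eq_mul]; ring
      _ = ∑ m ∈ Icc 1 k, ∑ e ∈ Icc 1 (k / m),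
            (#(smallDivisors k (m * e)) : ℝ) ^ q / (m * e : ℕ) :=
          sum_card_smallDivisors_nsmul k k _
      _ ≤ ∑ m ∈ Icc 1 k, ∑ e ∈ Icc 1 (k / m),
            (#(smallDivisors k m) : ℝ) ^ q / m * ((#(smallDivisors k e) : ℝ) ^ q / e) := by
          gcongr with m _ e _
          rw [div_mul_div_comm, Nat.cast_mul]
          gcongr
          exact card_smallDivisors_mul_pow_le k q m e
      _ ≤ ∑ m ∈ Icc 1 k, ∑ e ∈ Icc 1 k,
            (#(smallDivisors k m) : ℝ) ^ q / m * ((#(smallDivisors k e) : ℝ) ^ q / e) := by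
          gcongr with m _
          exact Nat.div_le_self k m
      _ = S ^ 2 := by rw [sq, sum_mul_sum]
      _ ≤ ((harmonic k : ℝ) ^ 2 ^ q) ^ 2 := by gcongr
      _ = (harmonic k : ℝ) ^ 2 ^ (q + 1) := by rw [← pow_mul, pow_succ]

lemma sum_card_smallDivisors_pow_le (q X : ℕ) :
    ∑ D ∈ Icc 1 X, (#(smallDivisors k D) : ℝ) ^ q ≤ X * (harmonic k : ℝ) ^ (2 ^ q - 1) := by
  induction q generalizing X with
  | zero => simp
  | succ q ih =>
    have hH : (0 : ℝ) ≤ harmonic k := harmonic_cast_nonneg k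
    calc ∑ D ∈ Icc 1 X, (#(smallDivisors k D) : ℝ) ^ (q + 1)
        = ∑ D ∈ Icc 1 X, #(smallDivisors k D) • (#(smallDivisors k D) : ℝ) ^ q :=
          sum_congr rfl fun D _ ↦ by rw [nsmul_eq_mul, pow_succ']
      _ = ∑ m ∈ Icc 1 k, ∑ e ∈ Icc 1 (X / m), (#(smallDivisors k (m * e)) : ℝ) ^ q :=
          sum_card_smallDivisors_nsmul k X _
      _ ≤ ∑ m ∈ Icc 1 k, (#(smallDivisors k m) : ℝ) ^ q *
            ∑ e ∈ Icc 1 (X / m), (#(smallDivisors k e) : ℝ) ^ q := by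
          simp only [mul_sum]
          gcongr with m _ e _
          exact card_smallDivisors_mul_pow_le k q m e
      _ ≤ ∑ m ∈ Icc 1 k, (#(smallDivisors k m) : ℝ) ^ q *
            (X / m * (harmonic k : ℝ) ^ (2 ^ q - 1)) := by
          gcongr with m _
          exact (ih (X / m)).trans (by gcongr; exact Nat.cast_div_le)
      _ = X * (harmonic k : ℝ) ^ (2 ^ q - 1) *
            ∑ m ∈ Icc 1 k, (#(smallDivisors k m) : ℝ) ^ q / m := by
          rw [mul_sum]
          exact sum_congr rfl fun m _ ↦ by ring
      _ ≤ X * (harmonic k : ℝ) ^ (2 ^ q - 1) * (harmonic k : ℝ) ^ 2 ^ q := by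
          gcongr
          exact sum_card_smallDivisors_pow_div_le k q
      _ = X * (harmonic k : ℝ) ^ (2 ^ (q + 1) - 1) := by
          rw [mul_assoc, ← pow_add, pow_succ]
          congr 2
          have := Nat.one_le_two_pow (n := q)
          omega

lemma pow_sum_card_smallDivisors_le {A : Finset ℕ} {X : ℕ} (hA : A ⊆ Icc 1 X) (q : ℕ) :
    (∑ D ∈ A, (#(smallDivisors k D) : ℝ)) ^ (q + 1) ≤
      (#A : ℝ) ^ q * (X * (harmonic k : ℝ) ^ (2 ^ (q + 1) - 1)) :=
  calc (∑ D ∈ A, (#(smallDivisors k D) : ℝ)) ^ (q + 1)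
      ≤ (#A : ℝ) ^ q * ∑ D ∈ A, (#(smallDivisors k D) : ℝ) ^ (q + 1) :=
        pow_sum_le_card_mul_sum_pow (fun _ _ ↦ Nat.cast_nonneg _) q
    _ ≤ (#A : ℝ) ^ q * ∑ D ∈ Icc 1 X, (#(smallDivisors k D) : ℝ) ^ (q + 1) := by gcongr
    _ ≤ (#A : ℝ) ^ q * (X * (harmonic k : ℝ) ^ (2 ^ (q + 1) - 1)) := by
        gcongr
        exact sum_card_smallDivisors_pow_le k (q + 1) X

end SmallDivisors

lemma exists_harmonic_pow_le_mul_rpow (p : ℕ) {δ : ℝ} (hδ : 0 < δ) :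
    ∃ C : ℝ, 0 < C ∧ ∀ k : ℕ, 1 ≤ k → (harmonic k : ℝ) ^ p ≤ C * (k : ℝ) ^ δ := by
  set η : ℝ := δ / (p + 1)
  have hη : 0 < η := by positivity
  refine ⟨(1 + 1 / η) ^ p, by positivity, fun k hk ↦ ?_⟩
  have hk1 : (1 : ℝ) ≤ k := by exact_mod_cast hk
  have hH0 : (0 : ℝ) ≤ harmonic k := harmonic_cast_nonneg k
  have hH : (harmonic k : ℝ) ≤ (1 + 1 / η) * (k : ℝ) ^ η :=
    calc (harmonic k : ℝ) ≤ 1 + Real.log k := harmonic_le_one_add_log k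
      _ ≤ (k : ℝ) ^ η + (k : ℝ) ^ η / η :=
        add_le_add (Real.one_le_rpow hk1 hη.le) (Real.log_le_rpow_div k.cast_nonneg hη)
      _ = (1 + 1 / η) * (k : ℝ) ^ η := by ring
  have hηp : η * p ≤ δ := by
    rw [div_mul_eq_mul_div, div_le_iff₀ (by positivity)]
    linarith
  calc (harmonic k : ℝ) ^ p ≤ ((1 + 1 / η) * (k : ℝ) ^ η) ^ p := by gcongr
    _ = (1 + 1 / η) ^ p * (k : ℝ) ^ (η * p) := by
      rw [mul_pow, ← Real.rpow_mul_natCast k.cast_nonneg]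
    _ ≤ (1 + 1 / η) ^ p * (k : ℝ) ^ δ := by gcongr

section Counting

/-- The progressions of length `k`, encoded as pairs `(a, d)`, that pass through `x` and `x + D`:
they are indexed by the position `i` of `x` and the index gap `m`. When `x < i * (D / m)`,
truncated subtraction adds a spurious pair, which does not affect the upper bound on the size. -/
def progressionsThrough (k x D : ℕ) : Finset (ℕ × ℕ) :=
  (range k ×ˢ smallDivisors k D).image fun p ↦ (x - p.1 * (D / p.2), D / p.2)

/-- The distances from `x` to the later elements of `{1, ..., M}` with the color of `x`. -/
def sameColorGaps (c : ℕ → ℕ) (M x : ℕ) : Finset ℕ := {D ∈ Icc 1 (M - x) | c (x + D) = c x}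

lemma card_progressionsThrough_le (k x D : ℕ) :
    #(progressionsThrough k x D) ≤ k * #(smallDivisors k D) :=
  card_image_le.trans_eq (by rw [card_product, card_range])

lemma mem_progressionsThrough {k i m : ℕ} (a d : ℕ) (hi : i < k) (hm : m ∈ Icc 1 k) :
    (a, d) ∈ progressionsThrough k (a + i * d) (m * d) := by
  have hdiv : m * d / m = d := Nat.mul_div_cancel_left d (mem_Icc.1 hm).1
  refine mem_image.2 ⟨(i, m), mem_product.2 ⟨mem_range.2 hi, ?_⟩, ?_⟩
  · exact mem_filter.2 ⟨hm, dvd_mul_right m d⟩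
  · simp only [hdiv, Nat.add_sub_cancel]

lemma sameColorGaps_subset_Icc (c : ℕ → ℕ) (M x : ℕ) : sameColorGaps c M x ⊆ Icc 1 M :=
  (filter_subset _ _).trans (Icc_subset_Icc_right (Nat.sub_le M x))

lemma card_sameColorGaps_le (c : ℕ → ℕ) (M x : ℕ) :
    #(sameColorGaps c M x) ≤ #{y ∈ Icc 1 M | c y = c x} := by
  refine card_le_card_of_injOn (x + ·) (fun D hD ↦ ?_) (add_right_injective x).injOn
  simp only [sameColorGaps, coe_filter, mem_Icc, Set.mem_ofPred_eq] at hD ⊢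
  exact ⟨by omega, hD.2⟩

lemma exists_add_lt_of_not_rainbowAP {k : ℕ} {c : ℕ → ℕ} {a d : ℕ} (h : ¬ RainbowAP k c a d) :
    ∃ i m, 1 ≤ m ∧ i + m < k ∧ c (a + (i + m) * d) = c (a + i * d) := by
  simp only [RainbowAP, not_forall] at h
  obtain ⟨i, hi, j, hj, hc, hne⟩ := h
  rcases lt_or_gt_of_ne hne with hij | hji
  · exact ⟨i, j - i, by omega, by omega, by rw [Nat.add_sub_cancel' hij.le, hc]⟩
  · exact ⟨j, i - j, by omega, by omega, by rw [Nat.add_sub_cancel' hji.le, hc]⟩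

lemma mul_le_sum_sameColorGaps {k L W M : ℕ} {c : ℕ → ℕ} (hM : L + (k - 1) * W ≤ M)
    (h : ∀ a ∈ Icc 1 L, ∀ d ∈ Icc 1 W, ¬ RainbowAP k c a d) :
    L * W ≤ ∑ x ∈ Icc 1 M, ∑ D ∈ sameColorGaps c M x, k * #(smallDivisors k D) := by
  have hcover : Icc 1 L ×ˢ Icc 1 W ⊆
      (Icc 1 M).biUnion fun x ↦ (sameColorGaps c M x).biUnion (progressionsThrough k x) := by
    rintro ⟨a, d⟩ had
    obtain ⟨ha, hd⟩ := mem_product.1 had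
    obtain ⟨i, m, hm, him, hc⟩ := exists_add_lt_of_not_rainbowAP (h a ha d hd)
    rw [mem_Icc] at ha hd
    have hlast : (i + m) * d ≤ (k - 1) * W := Nat.mul_le_mul (by omega) hd.2
    have hmd : 0 < m * d := Nat.mul_pos hm hd.1
    rw [add_mul] at hlast hc
    simp only [mem_biUnion]
    refine ⟨a + i * d, mem_Icc.2 ⟨by omega, by omega⟩, m * d, ?_,
      mem_progressionsThrough a d (by omega) (mem_Icc.2 ⟨hm, by omega⟩)⟩
    exact mem_filter.2 ⟨mem_Icc.2 ⟨hmd, by omega⟩, by rw [add_assoc, hc]⟩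
  calc L * W = #(Icc 1 L ×ˢ Icc 1 W) := by simp
    _ ≤ ∑ x ∈ Icc 1 M, #((sameColorGaps c M x).biUnion (progressionsThrough k x)) :=
      (card_le_card hcover).trans card_biUnion_le
    _ ≤ ∑ x ∈ Icc 1 M, ∑ D ∈ sameColorGaps c M x, k * #(smallDivisors k D) := by
      gcongr with x _
      exact card_biUnion_le.trans (sum_le_sum fun D _ ↦ card_progressionsThrough_le k x D)

end Counting

namespace EquinumerousColoring

variable {t n x : ℕ} {c : ℕ → ℕ}

lemma color_mem_Icc (hc : EquinumerousColoring t n c) (hx : x ∈ Icc 1 (t * n)) :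
    c x ∈ Icc 1 t := by
  have hcard : #{y ∈ Icc 1 (t * n) | c y ∈ Icc 1 t} = #(Icc 1 (t * n)) :=
    calc #{y ∈ Icc 1 (t * n) | c y ∈ Icc 1 t}
        = ∑ i ∈ Icc 1 t, #{y ∈ Icc 1 (t * n) | c y = i} :=
          (sum_card_fiberwise_eq_card_filter _ _ _).symm
      _ = ∑ _i ∈ Icc 1 t, n :=
          sum_congr rfl fun i hi ↦ hc i (mem_Icc.1 hi).1 (mem_Icc.1 hi).2
      _ = #(Icc 1 (t * n)) := by simp
  exact card_filter_eq_iff.1 hcard x hx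

lemma card_colorClass (hc : EquinumerousColoring t n c) (hx : x ∈ Icc 1 (t * n)) :
    #{y ∈ Icc 1 (t * n) | c y = c x} = n :=
  have hcx := mem_Icc.1 (hc.color_mem_Icc hx)
  hc (c x) hcx.1 hcx.2

end EquinumerousColoring

section Rainbow

variable {k s n q : ℕ}

lemma two_mul_sum_card_smallDivisors_lt (hs : 0 < s) (hn : 0 < n)
    (hbig : (2 * k : ℝ) ^ (q + 2) * (harmonic k : ℝ) ^ (2 ^ (q + 1) - 1) < (s : ℝ) ^ q)
    {A : Finset ℕ} (hA : A ⊆ Icc 1 (2 * k * s * n)) (hAn : #A ≤ n) :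
    2 * k * ∑ D ∈ A, (#(smallDivisors k D) : ℝ) < s * n := by
  set H : ℝ := (harmonic k : ℝ) ^ (2 ^ (q + 1) - 1)
  have hH : 0 ≤ H := pow_nonneg (harmonic_cast_nonneg k) _
  refine lt_of_pow_lt_pow_left₀ (q + 1) (by positivity) ?_
  calc (2 * k * ∑ D ∈ A, (#(smallDivisors k D) : ℝ)) ^ (q + 1)
      = (2 * k : ℝ) ^ (q + 1) * (∑ D ∈ A, (#(smallDivisors k D) : ℝ)) ^ (q + 1) := mul_pow ..
    _ ≤ (2 * k : ℝ) ^ (q + 1) * ((#A : ℝ) ^ q * ((2 * k * s * n : ℕ) * H)) := by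
      gcongr
      exact pow_sum_card_smallDivisors_le k hA q
    _ ≤ (2 * k : ℝ) ^ (q + 1) * ((n : ℝ) ^ q * ((2 * k * s * n : ℕ) * H)) := by gcongr
    _ = (n : ℝ) ^ (q + 1) * s * ((2 * k : ℝ) ^ (q + 2) * H) := by push_cast; ring
    _ < (n : ℝ) ^ (q + 1) * s * (s : ℝ) ^ q := by gcongr
    _ = (s * n : ℝ) ^ (q + 1) := by ring

lemma exists_rainbowAP_of_card_colorClass_le (hk : 0 < k) (hs : 0 < s) (hn : 0 < n)
    (hbig : (2 * k : ℝ) ^ (q + 2) * (harmonic k : ℝ) ^ (2 ^ (q + 1) - 1) < (s : ℝ) ^ q)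
    {c : ℕ → ℕ} (hc : ∀ x ∈ Icc 1 (2 * k * s * n), #{y ∈ Icc 1 (2 * k * s * n) | c y = c x} ≤ n) :
    ∃ a d : ℕ, 1 ≤ a ∧ 1 ≤ d ∧ a + (k - 1) * d ≤ 2 * k * s * n ∧ RainbowAP k c a d := by
  by_contra! hno
  set M := 2 * k * s * n with hM
  have hfit : ∀ d ≤ s * n, k * s * n + (k - 1) * d ≤ M := fun d hd ↦
    calc k * s * n + (k - 1) * d ≤ k * s * n + k * (s * n) := by gcongr; exact Nat.sub_le k 1
      _ = M := by rw [hM]; ring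
  have hcount : (k * s * n) * (s * n) ≤
      ∑ x ∈ Icc 1 M, ∑ D ∈ sameColorGaps c M x, k * #(smallDivisors k D) := by
    refine mul_le_sum_sameColorGaps (hfit _ le_rfl) fun a ha d hd ↦ ?_
    rw [mem_Icc] at ha hd
    exact hno a d ha.1 hd.1 ((Nat.add_le_add_right ha.2 _).trans (hfit d hd.2))
  have hgaps : ∀ x ∈ Icc 1 M,
      2 * k * ∑ D ∈ sameColorGaps c M x, (#(smallDivisors k D) : ℝ) < s * n := fun x hx ↦
    two_mul_sum_card_smallDivisors_lt hs hn hbig (sameColorGaps_subset_Icc c M x)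
      ((card_sameColorGaps_le c M x).trans (hc x hx))
  have hM_pos : 0 < M := by positivity
  refine lt_irrefl (2 * ((k * s * n) * (s * n)) : ℝ) ?_
  calc (2 * ((k * s * n) * (s * n)) : ℝ)
      ≤ 2 * ∑ x ∈ Icc 1 M, ∑ D ∈ sameColorGaps c M x, k * (#(smallDivisors k D) : ℝ) := by
        gcongr
        exact_mod_cast hcount
    _ = ∑ x ∈ Icc 1 M, 2 * k * ∑ D ∈ sameColorGaps c M x, (#(smallDivisors k D) : ℝ) := by
        simp only [mul_sum, mul_assoc]
    _ < ∑ _x ∈ Icc 1 M, (s * n : ℝ) :=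
        sum_lt_sum_of_nonempty (nonempty_Icc.2 hM_pos) hgaps
    _ = 2 * ((k * s * n) * (s * n)) := by
        rw [sum_const, nsmul_eq_mul, Nat.card_Icc, Nat.add_sub_cancel, hM]
        push_cast
        ring

end Rainbow

lemma exists_two_mul_pow_mul_harmonic_pow_lt {ε : ℝ} (hε : 0 < ε) :
    ∃ (q : ℕ) (B : ℝ), 0 < B ∧ ∀ k : ℕ, 1 ≤ k →
      (2 * k : ℝ) ^ (q + 2) * (harmonic k : ℝ) ^ (2 ^ (q + 1) - 1) <
        (B * (k : ℝ) ^ (1 + ε)) ^ q := by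
  -- `ε * q ≥ 3` makes up for the two extra factors `k` on the left and for the power of `log k`,
  -- which is `O(k)`.
  set q : ℕ := ⌈3 / ε⌉₊
  have hq_pos : 0 < q := Nat.ceil_pos.2 (by positivity)
  have hqε : 3 ≤ ε * q := (div_le_iff₀' hε).1 (Nat.le_ceil _)
  obtain ⟨C, hC, hharm⟩ := exists_harmonic_pow_le_mul_rpow (2 ^ (q + 1) - 1) one_pos
  set B : ℝ := 2 ^ (q + 2) * C + 1
  have hB : 2 ^ (q + 2) * C < B ^ q :=
    (lt_add_one _).trans_le (le_self_pow₀ (le_add_of_nonneg_left (by positivity)) hq_pos.ne')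
  refine ⟨q, B, by positivity, fun k hk ↦ ?_⟩
  have hk1 : (1 : ℝ) ≤ k := by exact_mod_cast hk
  have hrpow : (k : ℝ) ^ (q + 3) ≤ ((k : ℝ) ^ (1 + ε)) ^ q := by
    rw [← Real.rpow_natCast, ← Real.rpow_mul_natCast k.cast_nonneg]
    refine Real.rpow_le_rpow_of_exponent_le hk1 ?_
    push_cast
    linarith
  calc (2 * k : ℝ) ^ (q + 2) * (harmonic k : ℝ) ^ (2 ^ (q + 1) - 1)
      ≤ (2 * k : ℝ) ^ (q + 2) * (C * (k : ℝ) ^ (1 : ℝ)) := by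
        gcongr
        exact hharm k hk
    _ = 2 ^ (q + 2) * C * (k : ℝ) ^ (q + 3) := by rw [Real.rpow_one]; ring
    _ < B ^ q * (k : ℝ) ^ (q + 3) := by gcongr
    _ ≤ B ^ q * ((k : ℝ) ^ (1 + ε)) ^ q := by gcongr
    _ = (B * (k : ℝ) ^ (1 + ε)) ^ q := (mul_pow ..).symm

theorem rainbow_AP_of_equinumerous_coloring_five_halves_general (ε : ℝ) (hε : 0 < ε) :
    ∃ C : ℝ, 0 < C ∧ ∀ k : ℕ, 1 ≤ k →
      ∃ t : ℕ, 0 < t ∧ (t : ℝ) ≤ C * (k : ℝ) ^ (2 + ε) ∧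
        ∀ n : ℕ, 0 < n → ∀ c : ℕ → ℕ, EquinumerousColoring t n c →
          ∃ a d : ℕ, 1 ≤ a ∧ 1 ≤ d ∧ a + (k - 1) * d ≤ t * n ∧
            RainbowAP k c a d := by
  obtain ⟨q, B, hB, hbound⟩ := exists_two_mul_pow_mul_harmonic_pow_lt hε
  refine ⟨2 * (B + 1), by positivity, fun k hk ↦ ?_⟩
  have hk1 : (1 : ℝ) ≤ k := by exact_mod_cast hk
  set s : ℕ := ⌈B * (k : ℝ) ^ (1 + ε)⌉₊
  have hs_pos : 0 < s := Nat.ceil_pos.2 (by positivity)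
  have hs_le : (s : ℝ) ≤ (B + 1) * (k : ℝ) ^ (1 + ε) := by
    have hceil : (s : ℝ) < B * (k : ℝ) ^ (1 + ε) + 1 := Nat.ceil_lt_add_one (by positivity)
    have hone : 1 ≤ (k : ℝ) ^ (1 + ε) := Real.one_le_rpow hk1 (by positivity)
    linarith
  refine ⟨2 * k * s, by positivity, ?_, fun n hn c hc ↦ ?_⟩
  · calc ((2 * k * s : ℕ) : ℝ) = 2 * k * s := by push_cast; rfl
      _ ≤ 2 * k * ((B + 1) * (k : ℝ) ^ (1 + ε)) := by gcongr
      _ = 2 * (B + 1) * (k * (k : ℝ) ^ (1 + ε)) := by ring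
      _ = 2 * (B + 1) * (k : ℝ) ^ (2 + ε) := by
        rw [← Real.rpow_one_add' k.cast_nonneg (by positivity)]
        ring_nf
  · have hbig : (2 * k : ℝ) ^ (q + 2) * (harmonic k : ℝ) ^ (2 ^ (q + 1) - 1) < (s : ℝ) ^ q :=
      (hbound k hk).trans_le (by gcongr; exact Nat.le_ceil _)
    exact exists_rainbowAP_of_card_colorClass_le hk hs_pos hn hbig
      fun x hx ↦ (hc.card_colorClass hx).le

/-- **T_k = O(k^{5/2+ε}) for all ε > 0.**  For every `ε > 0` there is a constant
`C > 0` such that for every `k ≥ 3` there is a positive integer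
`t ≤ C * k^(5/2+ε)` such that every equinumerous `t`-coloring of `[t*n]`,
for every positive `n`, contains a rainbow arithmetic progression of length `k`. -/
theorem rainbow_AP_of_equinumerous_coloring_five_halves (ε : ℝ) (hε : 0 < ε) :
    ∃ C : ℝ, 0 < C ∧ ∀ k : ℕ, 3 ≤ k →
      ∃ t : ℕ, 0 < t ∧ (t : ℝ) ≤ C * (k : ℝ) ^ ((5 : ℝ) / 2 + ε) ∧
        ∀ n : ℕ, 0 < n → ∀ c : ℕ → ℕ, EquinumerousColoring t n c →
          ∃ a d : ℕ, 1 ≤ a ∧ 1 ≤ d ∧ a + (k - 1) * d ≤ t * n ∧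
            RainbowAP k c a d := by
  obtain ⟨C, hC, h⟩ := rainbow_AP_of_equinumerous_coloring_five_halves_general (1 / 2 + ε)
    (by positivity)
  have hexp : (2 : ℝ) + (1 / 2 + ε) = 5 / 2 + ε := by ring
  exact ⟨C, hC, fun k hk ↦ hexp ▸ h k (by omega)⟩
end

section
/- Let k ≥ 3 and write m = a(k−1) + b with a ≥ 1 and 0 ≤ b < k−1. Then the number of arithmetic progressions of length k contained in [m] equals b·C(a+1, 2) + (k−b−1)·C(a, 2), where C(x, 2) = x(x−1)/2 denotes a binomial coefficient. -/
/-!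
A progression of length `k` is determined by its first and last terms, and a pair `x < y` in `[m]`
arises in this way exactly when `x ≡ y` modulo `k - 1`. So progressions correspond to pairs of
distinct elements of the same residue class, and when `m = a(k-1) + b` there are `b` classes with
`a + 1` elements in `[m]` and `k - 1 - b` classes with `a` elements.
-/

/-- The set of arithmetic progressions of length `k` contained in
`[m] = {1, ..., m}`, encoded as pairs `(a₀, d)` of first term and common
difference, with `a₀ ≥ 1`, `d ≥ 1`, and last term `a₀ + (k-1)d ≤ m`. -/
def APSet (m k : ℕ) : Set (ℕ × ℕ) :=
  {p | 1 ≤ p.1 ∧ 1 ≤ p.2 ∧ p.1 + (k - 1) * p.2 ≤ m}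

open Finset

theorem card_filter_lt_and_map_eq {α β : Type*} [LinearOrder α] [DecidableEq β] {s : Finset α}
    {t : Finset β} {f : α → β} (hf : Set.MapsTo f s t) :
    #{p ∈ s ×ˢ s | p.1 < p.2 ∧ f p.1 = f p.2} = ∑ c ∈ t, (#{x ∈ s | f x = c}).choose 2 := by
  rw [card_eq_sum_card_fiberwise (f := (f ·.1)) (t := t)
    fun p hp ↦ hf (mem_product.1 (mem_filter.1 hp).1).1]
  refine sum_congr rfl fun c _ ↦ ?_
  rw [← card_product_filter_lt]
  congr 1
  grind

theorem sum_range_count_modEq {M : Type*} [AddCommMonoid M] {n : ℕ} (hn : 0 < n) (m : ℕ)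
    (g : ℕ → M) :
    ∑ r ∈ range n, g (m.count (· ≡ r [MOD n])) =
      (m % n) • g (m / n + 1) + (n - m % n) • g (m / n) := by
  have count_eq : ∀ r ∈ range n,
      m.count (· ≡ r [MOD n]) = if r < m % n then m / n + 1 else m / n := fun r hr ↦ by
    rw [Nat.count_modEq_card m hn, Nat.mod_eq_of_lt (mem_range.1 hr)]
    split_ifs <;> rfl
  have filter_lt : {r ∈ range n | r < m % n} = range (m % n) := by
    grind [Nat.mod_lt m hn]
  have filter_not_lt : {r ∈ range n | ¬r < m % n} = Ico (m % n) n := by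
    grind
  rw [sum_congr rfl fun r hr ↦ by rw [count_eq r hr, apply_ite g], sum_ite, filter_lt,
    filter_not_lt, sum_const, sum_const, card_range, Nat.card_Ico]

/-- Sends a progression of length `n + 1` in `{1, ..., m}` to its first and last terms, shifted
down by one to lie in `{0, ..., m - 1}`, where `Nat.count` counts residue classes. -/
def shiftedEndpoints (n : ℕ) (p : ℕ × ℕ) : ℕ × ℕ :=
  (p.1 - 1, p.1 - 1 + n * p.2)

theorem bijOn_shiftedEndpoints {n : ℕ} (hn : 0 < n) (m : ℕ) :
    Set.BijOn (shiftedEndpoints n) (APSet m (n + 1))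
      ↑{p ∈ range m ×ˢ range m | p.1 < p.2 ∧ p.1 % n = p.2 % n} := by
  refine Set.InvOn.bijOn (f' := fun p ↦ (p.1 + 1, (p.2 - p.1) / n)) ⟨?_, ?_⟩ ?_ ?_
  · rintro ⟨x, d⟩ ⟨hx, -, -⟩
    simp [shiftedEndpoints, Nat.mul_div_cancel_left d hn, Nat.sub_add_cancel hx]
  · rintro ⟨i, j⟩ hij
    obtain ⟨-, hlt, hmod⟩ := mem_filter.1 hij
    have dvd_sub : n ∣ j - i := (Nat.modEq_iff_dvd' hlt.le).1 hmod
    simp [shiftedEndpoints, Nat.mul_div_cancel' dvd_sub, Nat.add_sub_cancel' hlt.le]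
  · rintro ⟨x, d⟩ ⟨hx, hd, hle⟩
    have step_pos : 0 < n * d := Nat.mul_pos hn hd
    simp only [Nat.add_sub_cancel] at hx hle
    simp only [shiftedEndpoints, coe_filter, mem_product, mem_range, Set.mem_ofPred_eq,
      Nat.add_mul_mod_self_left, and_true]
    omega
  · rintro ⟨i, j⟩ hij
    obtain ⟨hmem, hlt, hmod⟩ := mem_filter.1 hij
    have hj : j < m := mem_range.1 (mem_product.1 hmem).2
    have dvd_sub : n ∣ j - i := (Nat.modEq_iff_dvd' hlt.le).1 hmod
    have diff_pos : 0 < (j - i) / n := Nat.div_pos (Nat.le_of_dvd (by omega) dvd_sub) hn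
    refine ⟨Nat.succ_pos i, diff_pos, ?_⟩
    simp only [Nat.add_sub_cancel, Nat.mul_div_cancel' dvd_sub]
    omega

theorem ncard_APSet_eq_sum_count {n : ℕ} (hn : 0 < n) (m : ℕ) :
    (APSet m (n + 1)).ncard = ∑ r ∈ range n, (m.count (· ≡ r [MOD n])).choose 2 := by
  have maps_mod : Set.MapsTo (· % n) (range m : Set ℕ) (range n) :=
    fun x _ ↦ mem_coe.2 (mem_range.2 (Nat.mod_lt x hn))
  rw [(bijOn_shiftedEndpoints hn m).ncard_eq, Set.ncard_coe_finset,
    card_filter_lt_and_map_eq maps_mod]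
  refine sum_congr rfl fun r hr ↦ ?_
  rw [Nat.count_eq_card_filter_range]
  simp only [Nat.ModEq, Nat.mod_eq_of_lt (mem_range.1 hr)]

/-- For `k ≥ 3` and `m = a(k-1) + b` with `a ≥ 1` and `0 ≤ b < k-1`, the
number of arithmetic progressions of length `k` contained in `[m]` equals
`b * C(a+1, 2) + (k-b-1) * C(a, 2)`. -/
theorem card_APSet (k m a b : ℕ) (hk : 3 ≤ k) (ha : 1 ≤ a) (hb : b < k - 1)
    (hm : m = a * (k - 1) + b) :
    (APSet m k).ncard = b * (a + 1).choose 2 + (k - b - 1) * a.choose 2 := by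
  obtain ⟨n, rfl⟩ : ∃ n, k = n + 1 := ⟨k - 1, by omega⟩
  rw [Nat.add_sub_cancel] at hb hm
  have hn : 0 < n := by omega
  obtain ⟨div_eq, mod_eq⟩ : m / n = a ∧ m % n = b :=
    (Nat.div_mod_unique hn).2 ⟨by rw [hm, mul_comm, add_comm], hb⟩
  rw [ncard_APSet_eq_sum_count hn, sum_range_count_modEq hn m (Nat.choose · 2), div_eq, mod_eq,
    smul_eq_mul, smul_eq_mul, Nat.sub_right_comm, Nat.add_sub_cancel]
end

section
/- Let k ≥ 3, t ≥ 1, n ≥ 2, and let c be an equinumerous t-coloring of [t·n]. Then the number of arithmetic progressions of length k contained in [t·n] that are not rainbow with respect to c is at most t · C(k, 2) · C(n, 2). -/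
/-- The set of arithmetic progressions of length `k` contained in `[m]` that
are not rainbow with respect to `c`, encoded as pairs `(a, d)`. -/
def NonRainbowAPSet (m k : ℕ) (c : ℕ → ℕ) : Set (ℕ × ℕ) :=
  {p | 1 ≤ p.1 ∧ 1 ≤ p.2 ∧ p.1 + (k - 1) * p.2 ≤ m ∧ ¬ RainbowAP k c p.1 p.2}

section MonochromaticPairs

open Finset

variable {α β : Type*} [LinearOrder α] [DecidableEq β]

/-- The monochromatic two-element subsets of `s` under the coloring `c`, each encoded as the
ordered pair `(x, y)` with `x < y`. -/
def monochromaticPairs (c : α → β) (s : Finset α) : Finset (α × α) :=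
  {p ∈ s ×ˢ s | p.1 < p.2 ∧ c p.1 = c p.2}

lemma mem_monochromaticPairs {c : α → β} {s : Finset α} {x y : α} :
    (x, y) ∈ monochromaticPairs c s ↔ (x ∈ s ∧ y ∈ s) ∧ x < y ∧ c x = c y := by
  simp only [monochromaticPairs, mem_filter, mem_product]

lemma filter_monochromaticPairs_eq (c : α → β) (s : Finset α) (b : β) :
    {p ∈ monochromaticPairs c s | c p.1 = b} =
      {p ∈ {x ∈ s | c x = b} ×ˢ {x ∈ s | c x = b} | p.1 < p.2} := by
  ext ⟨x, y⟩
  simp only [mem_filter, mem_monochromaticPairs, mem_product]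
  grind

lemma card_monochromaticPairs (c : α → β) (s : Finset α) :
    #(monochromaticPairs c s) = ∑ b ∈ s.image c, (#{x ∈ s | c x = b}).choose 2 := by
  have color_mem : ∀ p ∈ monochromaticPairs c s, c p.1 ∈ s.image c := fun p hp ↦
    mem_image_of_mem c (mem_monochromaticPairs.1 hp).1.1
  rw [card_eq_sum_card_fiberwise color_mem]
  simp only [filter_monochromaticPairs_eq, card_product_filter_lt]

end MonochromaticPairs

section ArithmeticProgressions

open Finset

variable {m k a d : ℕ} {c : ℕ → ℕ}

lemma exists_lt_color_eq_of_not_rainbowAP (h : ¬ RainbowAP k c a d) :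
    ∃ i j, i < j ∧ j < k ∧ c (a + i * d) = c (a + j * d) := by
  simp only [RainbowAP, not_forall] at h
  obtain ⟨i, hi, j, hj, hcolor, hne⟩ := h
  rcases lt_or_gt_of_ne hne with hij | hji
  · exact ⟨i, j, hij, hj, hcolor⟩
  · exact ⟨j, i, hji, hi, hcolor.symm⟩

/-- The arithmetic progression, as a pair (first term, difference), whose terms at the positions
`q.1.1 < q.1.2` are `q.2.1` and `q.2.2`. The value is meaningless if there is no such
progression. -/
def apThrough (q : (ℕ × ℕ) × (ℕ × ℕ)) : ℕ × ℕ :=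
  let d := (q.2.2 - q.2.1) / (q.1.2 - q.1.1)
  (q.2.1 - q.1.1 * d, d)

lemma apThrough_terms {i j : ℕ} (hij : i < j) (a d : ℕ) :
    apThrough ((i, j), (a + i * d, a + j * d)) = (a, d) := by
  have difference : (a + j * d - (a + i * d)) / (j - i) = d := by
    rw [Nat.add_sub_add_left, ← Nat.sub_mul, Nat.mul_div_cancel_left d (Nat.sub_pos_of_lt hij)]
  simp only [apThrough, difference, Nat.add_sub_cancel]

lemma ap_term_mem_Icc (ha : 1 ≤ a) (hm : a + (k - 1) * d ≤ m) {i : ℕ} (hi : i < k) :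
    a + i * d ∈ Icc 1 m :=
  mem_Icc.2 ⟨le_add_right ha, le_trans (by gcongr; exact Nat.le_sub_one_of_lt hi) hm⟩

lemma nonRainbowAPSet_subset_image_apThrough (m k : ℕ) (c : ℕ → ℕ) :
    NonRainbowAPSet m k c ⊆
      (({q ∈ range k ×ˢ range k | q.1 < q.2} ×ˢ monochromaticPairs c (Icc 1 m)).image apThrough :
        Finset (ℕ × ℕ)) := by
  rintro ⟨a, d⟩ ⟨ha, hd, hm, hnot⟩
  obtain ⟨i, j, hij, hj, hcolor⟩ := exists_lt_color_eq_of_not_rainbowAP hnot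
  have hi : i < k := hij.trans hj
  have terms_lt : a + i * d < a + j * d := by gcongr
  refine mem_image.2 ⟨((i, j), (a + i * d, a + j * d)), mem_product.2 ⟨?_, ?_⟩,
    apThrough_terms hij a d⟩
  · exact mem_filter.2 ⟨mem_product.2 ⟨mem_range.2 hi, mem_range.2 hj⟩, hij⟩
  · exact mem_monochromaticPairs.2
      ⟨⟨ap_term_mem_Icc ha hm hi, ap_term_mem_Icc ha hm hj⟩, terms_lt, hcolor⟩

theorem card_nonrainbow_le_general (m k : ℕ) (c : ℕ → ℕ) :
    (NonRainbowAPSet m k c).ncard ≤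
      k.choose 2 * ∑ b ∈ (Icc 1 m).image c, (#{x ∈ Icc 1 m | c x = b}).choose 2 := by
  calc (NonRainbowAPSet m k c).ncard
    _ ≤ #(({q ∈ range k ×ˢ range k | q.1 < q.2} ×ˢ
          monochromaticPairs c (Icc 1 m)).image apThrough) := by
      rw [← Set.ncard_coe_finset]
      exact Set.ncard_le_ncard (nonRainbowAPSet_subset_image_apThrough m k c)
        (finite_toSet _)
    _ ≤ #({q ∈ range k ×ˢ range k | q.1 < q.2} ×ˢ monochromaticPairs c (Icc 1 m)) :=
      card_image_le
    _ = k.choose 2 * ∑ b ∈ (Icc 1 m).image c, (#{x ∈ Icc 1 m | c x = b}).choose 2 := by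
      rw [card_product, card_product_filter_lt, card_range, card_monochromaticPairs]

end ArithmeticProgressions

namespace EquinumerousColoring

open Finset

variable {t n : ℕ} {c : ℕ → ℕ}

lemma card_color_class (hc : EquinumerousColoring t n c) {i : ℕ} (hi : i ∈ Icc 1 t) :
    #{x ∈ Icc 1 (t * n) | c x = i} = n :=
  hc i (mem_Icc.1 hi).1 (mem_Icc.1 hi).2

-- The classes of the colors `1, ..., t` have `t * n` elements in total, so they exhaust `[t * n]`.
lemma image_subset (hc : EquinumerousColoring t n c) : (Icc 1 (t * n)).image c ⊆ Icc 1 t := by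
  rw [image_subset_iff, ← card_filter_eq_iff, ← sum_card_fiberwise_eq_card_filter,
    sum_congr rfl fun _ hi ↦ hc.card_color_class hi, sum_const, Nat.card_Icc, Nat.card_Icc,
    Nat.add_sub_cancel, Nat.add_sub_cancel, smul_eq_mul]

lemma sum_choose_two_le (hc : EquinumerousColoring t n c) :
    ∑ i ∈ (Icc 1 (t * n)).image c, (#{x ∈ Icc 1 (t * n) | c x = i}).choose 2 ≤
      t * n.choose 2 := by
  calc ∑ i ∈ (Icc 1 (t * n)).image c, (#{x ∈ Icc 1 (t * n) | c x = i}).choose 2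
    _ ≤ ∑ i ∈ Icc 1 t, (#{x ∈ Icc 1 (t * n) | c x = i}).choose 2 :=
      sum_le_sum_of_subset hc.image_subset
    _ = ∑ _i ∈ Icc 1 t, n.choose 2 := sum_congr rfl fun _ hi ↦ by rw [hc.card_color_class hi]
    _ = t * n.choose 2 := by rw [sum_const, Nat.card_Icc, Nat.add_sub_cancel, smul_eq_mul]

end EquinumerousColoring

/-- For `k ≥ 3`, `t ≥ 1`, `n ≥ 2` and an equinumerous `t`-coloring `c` of
`[t*n]`, the number of length-`k` arithmetic progressions in `[t*n]` that
are not rainbow with respect to `c` is at most `t * C(k,2) * C(n,2)`. -/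
theorem card_nonrainbow_le (k t n : ℕ) (c : ℕ → ℕ) (hk : 3 ≤ k) (ht : 1 ≤ t)
    (hn : 2 ≤ n) (hc : EquinumerousColoring t n c) :
    (NonRainbowAPSet (t * n) k c).ncard ≤ t * k.choose 2 * n.choose 2 := by
  calc (NonRainbowAPSet (t * n) k c).ncard
    _ ≤ k.choose 2 * (t * n.choose 2) :=
      (card_nonrainbow_le_general (t * n) k c).trans (Nat.mul_le_mul_left _ hc.sum_choose_two_le)
    _ = t * k.choose 2 * n.choose 2 := by rw [mul_left_comm, mul_assoc]
end
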